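/- For every natural number n ≥ 6, the Artin group A[D_n] has property R_∞; that is, for every automorphism φ of A[D_n], the set of φ-twisted conjugacy classes of A[D_n] is infinite. -/

import Mathlib

/-- Two elements `g h` of a group `G` are `φ`-twisted conjugate if there is `x : G`
with `h = x * g * (φ x)⁻¹`. -/
def TwistedConj {G : Type*} [Group G] (φ : G ≃* G) (g h : G) : Prop :=
  ∃ x : G, h = x * g * (φ x)⁻¹

/-- `R(φ) = ∞`: the set of `φ`-twisted conjugacy classes is infinite. -/
def ReidemeisterInfinite {G : Type*} [Group G] (φ : G ≃* G) : Prop :=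
  Infinite (Quot (TwistedConj φ))

/-- A group `G` has property `R_∞` if `R(φ) = ∞` for every automorphism `φ` of `G`. -/
def PropertyRInfinity (G : Type*) [Group G] : Prop :=
  ∀ φ : G ≃* G, ReidemeisterInfinite φ

/-- The pairs of (0-indexed) generator indices of the Artin group of type `D_n` that are
joined by an edge of the Coxeter graph (i.e. satisfy a braid relation `sts = tst`).
In the 1-indexed notation of the paper these are the pairs `{i, i+1}` with `i+1 ≤ n-1`,
together with `{n-2, n}`. -/
def dnBraid (n : ℕ) (i j : Fin n) : Prop :=
  (j.val = i.val + 1 ∧ j.val ≤ n - 2) ∨ (i.val = j.val + 1 ∧ i.val ≤ n - 2) ∨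
  (i.val = n - 3 ∧ j.val = n - 1) ∨ (i.val = n - 1 ∧ j.val = n - 3)

/-- The defining relations of the Artin group of type `D_n`: braid relations
`t_i t_j t_i = t_j t_i t_j` for pairs joined by an edge, and commutation relations
`t_i t_j = t_j t_i` for all other pairs. -/
def dnRels (n : ℕ) : Set (FreeGroup (Fin n)) :=
  { r | ∃ i j : Fin n, i ≠ j ∧
      ((dnBraid n i j ∧
          r = FreeGroup.of i * FreeGroup.of j * FreeGroup.of i *
              (FreeGroup.of j * FreeGroup.of i * FreeGroup.of j)⁻¹) ∨
        (¬ dnBraid n i j ∧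
          r = FreeGroup.of i * FreeGroup.of j * (FreeGroup.of j * FreeGroup.of i)⁻¹)) }

/-- The Artin group of type `D_n` (generators indexed by `Fin n`, with `i : Fin n`
corresponding to the generator `t_{i+1}` of the paper). -/
abbrev ArtinD (n : ℕ) : Type := PresentedGroup (dnRels n)

/-!
Folding the Coxeter graph maps `A[D_n]` onto the braid group on `n` strands, hence onto the
symmetric group; call the kernel of this action pure. The additive integer-valued functions on the
pure subgroup form, rationally, the permutation module on unordered pairs of strands, with the
winding numbers as a basis. Call the differences of the total windings of two strands roots.

An automorphism preserving the pure subgroup induces an automorphism of the symmetric group. It acts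
on that permutation module, and comparing traces shows that it sends transpositions to
transpositions. It therefore permutes the roots up to sign.

For an arbitrary automorphism `φ`, let `p` be least such that `φ ^ p` preserves the pure subgroup.
Composing with an inner automorphism, which does not change the finiteness of the number of twisted
classes, one obtains `ψ` such that `ψ ^ p` fixes a given root. The sum of that root over its
`ψ`-orbit is a `ψ`-invariant additive function on a normal subgroup of finite index. By minimality
of `p` the intermediate powers of `φ` pull the pure subgroup back to subgroups that still act
through at least the alternating group, and this provides a commutator on which the sum is nonzero.
The powers of this commutator meet infinitely many twisted conjugacy classes.
-/

open scoped commutatorElement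

section AdditiveOn

variable {G M : Type*} [Group G] [AddCommGroup M]

/-- `f` restricts to a homomorphism from the subgroup `K` to the additive group `M`. Keeping `f`
defined on all of `G`, with arbitrary values outside `K`, makes it easy to precompose it with
conjugations and automorphisms of `G`. -/
def AdditiveOn (K : Subgroup G) (f : G → M) : Prop :=
  ∀ x ∈ K, ∀ y ∈ K, f (x * y) = f x + f y

namespace AdditiveOn

variable {K : Subgroup G} {f : G → M} {x y : G}

theorem map_one (hf : AdditiveOn K f) : f 1 = 0 := by
  simpa using hf 1 K.one_mem 1 K.one_mem

theorem map_inv (hf : AdditiveOn K f) (hx : x ∈ K) : f x⁻¹ = -f x := by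
  have h := hf x hx x⁻¹ (K.inv_mem hx)
  rw [mul_inv_cancel, hf.map_one] at h
  exact eq_neg_of_add_eq_zero_right h.symm

theorem map_pow (hf : AdditiveOn K f) (hx : x ∈ K) (k : ℕ) : f (x ^ k) = k • f x := by
  induction k with
  | zero => simp [hf.map_one]
  | succ k ih => rw [pow_succ, hf _ (K.pow_mem hx k) _ hx, ih, succ_nsmul]

theorem map_mul_inv (hf : AdditiveOn K f) (hx : x ∈ K) (hy : y ∈ K) :
    f (x * y⁻¹) = f x - f y := by
  rw [hf _ hx _ (K.inv_mem hy), hf.map_inv hy, sub_eq_add_neg]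

theorem map_conj (hf : AdditiveOn K f) (hx : x ∈ K) (hy : y ∈ K) : f (y * x * y⁻¹) = f x := by
  rw [hf.map_mul_inv (K.mul_mem hy hx) hy, hf _ hy _ hx, add_sub_cancel_left]

theorem map_commutator (hf : AdditiveOn K f) (hx : x ∈ K) (hy : y ∈ K) : f ⁅x, y⁆ = 0 := by
  rw [commutatorElement_def, hf.map_mul_inv (K.mul_mem (K.mul_mem hx hy) (K.inv_mem hx)) hy,
    hf.map_conj hy hx, sub_self]

theorem comp_hom {H : Type*} [Group H] {L : Subgroup H} (hf : AdditiveOn K f) (Ψ : H →* G)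
    (hΨ : ∀ x ∈ L, Ψ x ∈ K) : AdditiveOn L (fun x => f (Ψ x)) := fun x hx y hy => by
  simpa only [map_mul] using hf _ (hΨ x hx) _ (hΨ y hy)

theorem comp_conj (hf : AdditiveOn K f) [K.Normal] (g : G) :
    AdditiveOn K (fun x => f (g * x * g⁻¹)) :=
  hf.comp_hom (MulAut.conj g).toMonoidHom fun x hx => ‹K.Normal›.conj_mem x hx g

theorem sum {ι : Type*} {s : Finset ι} {f : ι → G → M} (hf : ∀ i ∈ s, AdditiveOn K (f i)) :
    AdditiveOn K (fun x => ∑ i ∈ s, f i x) := fun x hx y hy => by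
  rw [← Finset.sum_add_distrib]
  exact Finset.sum_congr rfl fun i hi => hf i hi x hx y hy

theorem zsmul (hf : AdditiveOn K f) (c : ℤ) : AdditiveOn K (fun x => c • f x) :=
  fun x hx y hy => by simp only [hf x hx y hy, smul_add]

theorem sub {f' : G → M} (hf : AdditiveOn K f) (hf' : AdditiveOn K f') :
    AdditiveOn K (fun x => f x - f' x) :=
  fun x hx y hy => by simp only [hf x hx y hy, hf' x hx y hy]; abel

theorem eq_zero_of_mem_normalClosure [K.Normal] (hf : AdditiveOn K f) {S : Set G}
    (hS : ∀ s ∈ S, s ∈ K ∧ ∀ g, f (g * s * g⁻¹) = 0) (hx : x ∈ Subgroup.normalClosure S) :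
    f x = 0 := by
  have hle : Subgroup.closure (Group.conjugatesOfSet S) ≤ K :=
    Subgroup.normalClosure_le_normal fun s hs => (hS s hs).1
  induction hx using Subgroup.closure_induction with
  | mem x hx =>
    obtain ⟨s, hs, hx⟩ := Group.mem_conjugatesOfSet_iff.1 hx
    obtain ⟨g, rfl⟩ := isConj_iff.1 hx
    exact (hS s hs).2 g
  | one => exact hf.map_one
  | mul x y hx hy ihx ihy => rw [hf x (hle hx) y (hle hy), ihx, ihy, add_zero]
  | inv x hx ih => rw [hf.map_inv (hle hx), ih, neg_zero]

theorem apply_conj_eq_of_mem_centralizer_sup [K.Normal] (hf : AdditiveOn K f) {s g : G}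
    (hs : s ∈ K) (hg : g ∈ Subgroup.centralizer {s} ⊔ K) : f (g * s * g⁻¹) = f s := by
  obtain ⟨c, hc, k, hk, rfl⟩ := Subgroup.mem_sup_of_normal_right.1 hg
  have hcs : c * s * c⁻¹ = s :=
    mul_inv_eq_iff_eq_mul.2 (Subgroup.mem_centralizer_singleton_iff.1 hc)
  have := (hf.comp_conj c).map_conj hs hk
  simpa only [mul_assoc, mul_inv_rev, hcs] using this

theorem apply_conj_mul_inv_eq_zero [IsAddTorsionFree M] [K.Normal] (hf : AdditiveOn K f)
    {a b : G} (hab : Commute a b) (ha : a ^ 2 ∈ K) (hb : b ^ 2 ∈ K) (hmem : a * b⁻¹ ∈ K) {g : G}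
    (hfa : f (g * a ^ 2 * g⁻¹) = 0) (hfb : f (g * b ^ 2 * g⁻¹) = 0) :
    f (g * (a * b⁻¹) * g⁻¹) = 0 := by
  have hsq : (a * b⁻¹) ^ 2 = a ^ 2 * (b ^ 2)⁻¹ := by rw [hab.inv_right.mul_pow, inv_pow]
  have htwo : 2 • f (g * (a * b⁻¹) * g⁻¹) = 0 := by
    rw [← (hf.comp_conj g).map_pow hmem 2, hsq, (hf.comp_conj g).map_mul_inv ha hb, hfa, hfb,
      sub_zero]
  exact (nsmul_eq_zero_iff_right two_ne_zero).1 htwo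

end AdditiveOn

end AdditiveOn

section Reidemeister

variable {G : Type*} [Group G]

theorem TwistedConj.equivalence (φ : G ≃* G) : Equivalence (TwistedConj φ) where
  refl g := ⟨1, by simp⟩
  symm := by
    rintro g _ ⟨x, rfl⟩
    exact ⟨x⁻¹, by simp [mul_assoc]⟩
  trans := by
    rintro g _ _ ⟨x, rfl⟩ ⟨y, rfl⟩
    exact ⟨y * x, by simp [mul_assoc]⟩

theorem TwistedConj.mul_inv_right {φ : MulAut G} {x y : G} (h : TwistedConj φ x y) (g : G) :
    TwistedConj (MulAut.conj g * φ) (x * g⁻¹) (y * g⁻¹) := by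
  obtain ⟨z, rfl⟩ := h
  exact ⟨z, by simp [mul_assoc]⟩

theorem ReidemeisterInfinite.of_conj_mul {φ : MulAut G} (g : G)
    (h : ReidemeisterInfinite (MulAut.conj g * φ)) : ReidemeisterInfinite φ := by
  have : Infinite (Quot (TwistedConj (MulAut.conj g * φ))) := h
  refine Infinite.of_surjective (Quot.map (· * g⁻¹) fun _ _ h => h.mul_inv_right g) ?_
  rintro ⟨x⟩
  exact ⟨Quot.mk _ (x * g), congrArg _ (mul_inv_cancel_right x g)⟩

/-- The classes of the powers of `y` fall into infinitely many pieces: if infinitely many of them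
were twisted conjugate, two of the conjugating elements would differ by an element of `K`, and `F`
is constant along twisted conjugation by elements of `K`. -/
theorem reidemeisterInfinite_of_additiveOn {M : Type*} [AddCommGroup M] [IsAddTorsionFree M]
    {φ : G ≃* G} {K : Subgroup G} [K.FiniteIndex] {F : G → M} (hF : AdditiveOn K F)
    (hK : ∀ x ∈ K, φ x ∈ K) (hφ : ∀ x ∈ K, F (φ x) = F x) {y : G} (hy : y ∈ K) (hFy : F y ≠ 0) :
    ReidemeisterInfinite φ := by
  by_contra hfin
  have : Finite (Quot (TwistedConj φ)) := not_infinite_iff_finite.1 hfin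
  let c : ℕ → Quot (TwistedConj φ) := fun j => Quot.mk _ (y ^ j)
  obtain ⟨q, hq⟩ := Finite.exists_infinite_fiber c
  obtain ⟨i, hi⟩ : (c ⁻¹' {q}).Nonempty := Set.Nonempty.of_subtype
  have hconj (j : c ⁻¹' {q}) : TwistedConj φ (y ^ i) (y ^ (j : ℕ)) :=
    ((TwistedConj.equivalence φ).quot_mk_eq_iff _ _).1 (hi.trans j.2.symm)
  choose x hx using hconj
  obtain ⟨j, l, hjl, hcoset⟩ := Finite.exists_ne_map_eq_of_infinite
    fun j => (QuotientGroup.mk (x j)⁻¹ : G ⧸ K)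
  obtain ⟨k, hk, hxj⟩ : ∃ k ∈ K, x j = k * x l :=
    ⟨x j * (x l)⁻¹, by simpa using QuotientGroup.eq.1 hcoset, by simp⟩
  have hpow : y ^ (j : ℕ) = k * y ^ (l : ℕ) * (φ k)⁻¹ := by
    rw [hx j, hx l, hxj, map_mul]
    group
  have hF_eq : (j : ℕ) • F y = (l : ℕ) • F y := by
    rw [← hF.map_pow hy, hpow, hF.map_mul_inv (K.mul_mem hk (K.pow_mem hy _)) (hK k hk),
      hF _ hk _ (K.pow_mem hy _), hφ k hk, add_sub_cancel_left, hF.map_pow hy]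
  exact hjl (Subtype.ext ((IsAddLeftRegular.all (F y)).nsmul_injective hFy hF_eq))

theorem reidemeisterInfinite_of_sum_iterates_ne_zero {M : Type*} [AddCommGroup M]
    [IsAddTorsionFree M] {φ : MulAut G} {P : Subgroup G} [P.FiniteIndex] {f : G → M}
    (hf : AdditiveOn P f) {p : ℕ} (hp : 0 < p) (hP : ∀ x ∈ P, (φ ^ p) x ∈ P)
    (hφ : ∀ x ∈ P, f ((φ ^ p) x) = f x) {y : G} (hy : ∀ j < p, (φ ^ j) y ∈ P)
    (hsum : ∑ j ∈ Finset.range p, f ((φ ^ j) y) ≠ 0) : ReidemeisterInfinite φ := by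
  let K : Subgroup G := ⨅ j : Fin p, P.comap (φ ^ (j : ℕ)).toMonoidHom
  have mem_K (x : G) : x ∈ K ↔ ∀ j < p, (φ ^ j) x ∈ P := by
    simp [K, Subgroup.mem_iInf, Fin.forall_iff]
  have : K.FiniteIndex := Subgroup.finiteIndex_iInf fun j => ⟨by
    rw [Subgroup.index_comap_of_surjective _ (φ ^ (j : ℕ)).surjective]
    exact Subgroup.FiniteIndex.index_ne_zero⟩
  have iterate_succ (j : ℕ) (x : G) : (φ ^ j) (φ x) = (φ ^ (j + 1)) x := by
    rw [pow_succ, MulAut.mul_apply]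
  refine reidemeisterInfinite_of_additiveOn (K := K)
    (F := fun x => ∑ j ∈ Finset.range p, f ((φ ^ j) x)) (.sum fun j hj => ?_) (fun x hx => ?_)
    (fun x hx => ?_) ((mem_K y).2 hy) hsum
  · exact hf.comp_hom (φ ^ j).toMonoidHom fun x hx => (mem_K x).1 hx j (Finset.mem_range.1 hj)
  · refine (mem_K _).2 fun j hj => ?_
    rw [iterate_succ]
    obtain hlt | rfl := Nat.lt_or_eq_of_le (Nat.succ_le_of_lt hj)
    · exact (mem_K x).1 hx _ hlt
    · exact hP x (by simpa using (mem_K x).1 hx 0 hp)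
  · simp only [iterate_succ]
    have hshift := (Finset.sum_range_succ' (fun j => f ((φ ^ j) x)) p).symm.trans
      (Finset.sum_range_succ _ p)
    rw [hφ x (by simpa using (mem_K x).1 hx 0 hp)] at hshift
    exact add_right_cancel hshift

end Reidemeister

section GroupTheory

variable {G H : Type*} [Group G] [Group H]

theorem finite_monoidHom_of_fg [Group.FG G] [Finite H] : Finite (G →* H) := by
  obtain ⟨S, hS, hfin⟩ := Group.fg_iff.1 ‹Group.FG G›
  have := hfin.to_subtype
  refine Finite.of_injective (fun (f : G →* H) (s : S) => f s) fun f f' h => ?_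
  exact MonoidHom.eq_of_eqOn_dense hS fun s hs => congrFun h ⟨s, hs⟩

theorem exists_apply_pow_eq [Group.FG G] [Finite H] (ρ : G →* H) (φ : MulAut G) :
    ∃ p, 0 < p ∧ ∀ x, ρ ((φ ^ p) x) = ρ x := by
  have : Finite (G →* H) := finite_monoidHom_of_fg
  let precomp : (G →* H) → (G →* H) := fun f => f.comp φ.toMonoidHom
  have precomp_injective : Function.Injective precomp := fun f f' h =>
    MonoidHom.ext fun x => by simpa [precomp] using DFunLike.congr_fun h (φ⁻¹ x)
  have iterate_apply (k : ℕ) (f : G →* H) (x : G) : precomp^[k] f x = f ((φ ^ k) x) := by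
    induction k generalizing f with
    | zero => rfl
    | succ k ih => rw [Function.iterate_succ_apply, ih, pow_succ']; rfl
  obtain ⟨p, hp, h⟩ := precomp_injective.mem_periodicPts ρ
  exact ⟨p, hp, fun x => by rw [← iterate_apply, h]⟩

theorem comap_eq_of_comap_le {K : Subgroup G} [K.FiniteIndex] {φ : MulAut G}
    (h : K.comap φ.toMonoidHom ≤ K) : K.comap φ.toMonoidHom = K := by
  by_contra hne
  have hindex := Subgroup.index_comap_of_surjective K (f := φ.toMonoidHom) φ.surjective
  have : (K.comap φ.toMonoidHom).FiniteIndex :=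
    ⟨hindex.trans_ne Subgroup.FiniteIndex.index_ne_zero⟩
  exact (Subgroup.index_strictAnti (lt_of_le_of_ne h hne)).ne hindex.symm

theorem exists_pow_mem_ker_iff [Group.FG G] [Finite H] (ρ : G →* H) (φ : MulAut G) :
    ∃ p, 0 < p ∧ (∀ x, (φ ^ p) x ∈ ρ.ker ↔ x ∈ ρ.ker) ∧
      ∀ k, 0 < k → k < p → ¬ ρ.ker.comap (φ ^ k).toMonoidHom ≤ ρ.ker := by
  classical
  have hex : ∃ p, 0 < p ∧ ρ.ker.comap (φ ^ p).toMonoidHom = ρ.ker := by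
    obtain ⟨p, hp, hρ⟩ := exists_apply_pow_eq ρ φ
    exact ⟨p, hp, Subgroup.ext fun x => by simp [MonoidHom.mem_ker, hρ]⟩
  obtain ⟨hp, hker⟩ := Nat.find_spec hex
  exact ⟨Nat.find hex, hp, SetLike.ext_iff.1 hker, fun k hk hkp hle =>
    Nat.find_min hex hkp ⟨hk, comap_eq_of_comap_le hle⟩⟩

theorem le_map_iInf_of_le_commutator {ι : Type*} {ρ : G →* H} {M : Subgroup H}
    (hM : M ≤ ⁅M, M⁆) (hρ : M ≤ ρ.range) {N : ι → Subgroup G} (hN : ∀ i, (N i).Normal)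
    {s : Finset ι} (hs : ∀ i ∈ s, M ≤ (N i).map ρ) : M ≤ (⨅ i ∈ s, N i).map ρ := by
  classical
  induction s using Finset.induction_on with
  | empty => simpa [← MonoidHom.range_eq_map] using hρ
  | insert i s _ ih =>
    rw [Finset.forall_mem_insert] at hs
    have : (⨅ i ∈ s, N i).Normal :=
      Subgroup.normal_iInf_normal fun i => Subgroup.normal_iInf_normal fun _ => hN i
    calc M ≤ ⁅(N i).map ρ, (⨅ i ∈ s, N i).map ρ⁆ :=
          hM.trans (Subgroup.commutator_mono hs.1 (ih hs.2))
      _ = (⁅N i, ⨅ i ∈ s, N i⁆).map ρ := (Subgroup.map_commutator _ _ ρ).symm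
      _ ≤ (N i ⊓ ⨅ i ∈ s, N i).map ρ := Subgroup.map_mono (Subgroup.commutator_le_inf _ _)
      _ = (⨅ j ∈ insert i s, N j).map ρ := by rw [Finset.iInf_insert]

theorem conj_mul_pow_eq {ρ : G →* H} {φ : MulAut G} {g : G} {p : ℕ}
    (hg : ∀ j, 0 < j → j < p → ρ ((φ ^ j) g) = 1) {j : ℕ} (hj : 0 < j) (hjp : j ≤ p) :
    ∃ h, ρ h = ρ g ∧ (MulAut.conj g * φ) ^ j = MulAut.conj h * φ ^ j := by
  induction j, hj using Nat.le_induction with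
  | base => exact ⟨g, rfl, by simp⟩
  | succ j hj ih =>
    obtain ⟨h, hρh, hh⟩ := ih (by omega)
    refine ⟨h * (φ ^ j) g, by rw [map_mul, hg j hj hjp, mul_one, hρh], ?_⟩
    ext x
    rw [pow_succ, hh]
    simp [pow_succ, mul_assoc]

theorem conj_mul_pow_mem_ker_iff {ρ : G →* H} {φ : MulAut G} {g : G} {p : ℕ}
    (hg : ∀ j, 0 < j → j < p → ρ ((φ ^ j) g) = 1) {j : ℕ} (hj : 0 < j) (hjp : j ≤ p) (x : G) :
    ((MulAut.conj g * φ) ^ j) x ∈ ρ.ker ↔ (φ ^ j) x ∈ ρ.ker := by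
  obtain ⟨h, -, hh⟩ := conj_mul_pow_eq hg hj hjp
  rw [hh, MulAut.mul_apply, MulAut.conj_apply, MonoidHom.normal_ker ρ |>.mem_comm_iff,
    inv_mul_cancel_left]

end GroupTheory

section Permutations

variable {α : Type*}

theorem exists_ne_and_ne (h : 3 ≤ Nat.card α) (a b : α) : ∃ c, c ≠ a ∧ c ≠ b := by
  have : Finite α := Nat.finite_of_card_ne_zero (by omega)
  exact ENat.exists_ne_ne_of_three_le (by rw [ENat.card_eq_coe_natCard]; exact_mod_cast h) a b

theorem exists_perm_apply_eq_and_eq {a b c d : α} (hab : a ≠ b) (hcd : c ≠ d) :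
    ∃ σ : Equiv.Perm α, σ a = c ∧ σ b = d :=
  MulAction.is_two_pretransitive_iff.1 (Equiv.Perm.isMultiplyPretransitive α 2) hab hcd

variable [DecidableEq α]

theorem apply_eq_self_of_commute_swap {σ : Equiv.Perm α} {a b : α} (hσ : σ.IsSwap) (hab : a ≠ b)
    (hcomm : Commute σ (Equiv.swap a b)) (hne : σ ≠ Equiv.swap a b) : σ a = a ∧ σ b = b := by
  have hσb : σ b = Equiv.swap a b (σ a) := by
    simpa using DFunLike.congr_fun hcomm.eq a
  rcases eq_or_ne (σ a) a with ha | ha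
  · exact ⟨ha, by rw [hσb, ha, Equiv.swap_apply_left]⟩
  exfalso
  rcases eq_or_ne (σ a) b with hb | hb
  · refine hne (hb ▸ hσ.isCycle.eq_swap_of_apply_apply_eq_self ha ?_)
    rw [hb, hσb, hb, Equiv.swap_apply_right]
  · rw [Equiv.swap_apply_of_ne_of_ne ha hb] at hσb
    exact hab (σ.injective hσb).symm

theorem exists_eq_mul_of_antisymm (h3 : 3 ≤ Nat.card α) {F : α → α → ℤ} {k l : α} (hkl : k ≠ l)
    (hsymm : ∀ i j, i ≠ j → F i j = F j i)
    (hanti : ∀ i j, i ≠ j → F (Equiv.swap k l i) (Equiv.swap k l j) = -F i j)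
    (hinv : ∀ u v, u ≠ v → u ∉ ({k, l} : Set α) → v ∉ ({k, l} : Set α) →
      ∀ i j, i ≠ j → F (Equiv.swap u v i) (Equiv.swap u v j) = F i j) :
    ∃ c, ∀ i j, i ≠ j → F i j = c * (((if k = i then 1 else 0) + if k = j then 1 else 0) -
      ((if l = i then 1 else 0) + if l = j then 1 else 0)) := by
  obtain ⟨e, hek, hel⟩ := exists_ne_and_ne h3 k l
  have hFk (j : α) (hjk : j ≠ k) (hjl : j ≠ l) : F k j = F k e := by
    rcases eq_or_ne j e with rfl | hje
    · rfl
    · have := hinv j e hje (by simp [hjk, hjl]) (by simp [hek, hel]) k j hjk.symm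
      rwa [Equiv.swap_apply_left, Equiv.swap_apply_of_ne_of_ne hjk.symm hek.symm, eq_comm] at this
  have hFl (j : α) (hjk : j ≠ k) (hjl : j ≠ l) : F l j = -F k e := by
    have := hanti k j hjk.symm
    rwa [Equiv.swap_apply_left, Equiv.swap_apply_of_ne_of_ne hjk hjl, hFk j hjk hjl] at this
  have hFkl : F k l = 0 := by
    have := hanti k l hkl
    rw [Equiv.swap_apply_left, Equiv.swap_apply_right, hsymm l k hkl.symm] at this
    omega
  have hF_off (i j : α) (hij : i ≠ j) (hi : i ≠ k ∧ i ≠ l) (hj : j ≠ k ∧ j ≠ l) : F i j = 0 := by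
    have := hanti i j hij
    rw [Equiv.swap_apply_of_ne_of_ne hi.1 hi.2, Equiv.swap_apply_of_ne_of_ne hj.1 hj.2] at this
    omega
  refine ⟨F k e, fun i j hij => ?_⟩
  rcases eq_or_ne i k with rfl | hik
  · rcases eq_or_ne j l with rfl | hjl
    · simp [hFkl, hij, hij.symm]
    · simp [hFk j hij.symm hjl, hkl.symm, hij, hjl.symm]
  rcases eq_or_ne i l with rfl | hil
  · rcases eq_or_ne j k with rfl | hjk
    · simp [hsymm i j hij, hFkl, hij, hij.symm]
    · simp [hFl j hjk hij.symm, hkl, hij, hjk.symm]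
  rcases eq_or_ne j k with rfl | hjk
  · simp [hsymm i j hij, hFk i hik hil, hkl.symm, hij.symm, hil.symm]
  rcases eq_or_ne j l with rfl | hjl
  · simp [hsymm i j hij, hFl i hik hil, hkl, hij.symm, hik.symm]
  · simp [hF_off i j hij ⟨hik, hil⟩ ⟨hjk, hjl⟩, hik.symm, hil.symm, hjk.symm, hjl.symm]

variable [Fintype α]

theorem exists_mem_alternatingGroup_apply_eq_and_eq (h : 4 ≤ Nat.card α) {a b c d : α}
    (hab : a ≠ b) (hcd : c ≠ d) : ∃ σ ∈ alternatingGroup α, σ a = c ∧ σ b = d := by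
  have := alternatingGroup.isMultiplyPretransitive α
  have : MulAction.IsMultiplyPretransitive (alternatingGroup α) α 2 :=
    MulAction.isMultiplyPretransitive_of_le (n := Nat.card α - 2) (by omega) (by omega)
  obtain ⟨σ, hσ⟩ := MulAction.is_two_pretransitive_iff.1 this hab hcd
  exact ⟨σ, σ.2, hσ⟩

/-- The ordered pairs of distinct points whose underlying unordered pair is mapped to itself by
`σ`; each invariant unordered pair is counted twice. -/
def fixedPairs (σ : Equiv.Perm α) : Finset (α × α) :=
  Finset.univ.offDiag.filter fun p => s(σ p.1, σ p.2) = s(p.1, p.2)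

theorem fixedPairs_of_involutive {σ : Equiv.Perm α} (hσ : Function.Involutive σ) :
    fixedPairs σ = (σ.supportᶜ).offDiag ∪ σ.support.image fun a => (a, σ a) := by
  ext ⟨a, b⟩
  simp only [fixedPairs, Finset.mem_filter, Finset.mem_univ, true_and, Finset.mem_union,
    Finset.mem_offDiag, Finset.mem_compl, Equiv.Perm.mem_support, not_not, Finset.mem_image,
    Prod.mk.injEq, Sym2.eq_iff]
  constructor
  · rintro ⟨hab, ⟨ha, hb⟩ | ⟨ha, -⟩⟩
    · exact .inl ⟨ha, hb, hab⟩
    · exact .inr ⟨a, fun h => hab (h.symm.trans ha), rfl, ha⟩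
  · rintro (⟨ha, hb, hab⟩ | ⟨c, hc, rfl, rfl⟩)
    · exact ⟨hab, .inl ⟨ha, hb⟩⟩
    · exact ⟨Ne.symm hc, .inr ⟨rfl, hσ c⟩⟩

theorem card_fixedPairs_of_involutive {σ : Equiv.Perm α} (hσ : Function.Involutive σ) :
    ((fixedPairs σ).card : ℤ) =
      (Nat.card α - σ.support.card) * (Nat.card α - σ.support.card - 1) + σ.support.card := by
  have hdisj : Disjoint (σ.supportᶜ).offDiag (σ.support.image fun a => (a, σ a)) := by
    simp +contextual [Finset.disjoint_left]
  have hcompl : (σ.supportᶜ.card : ℤ) = Nat.card α - σ.support.card := by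
    rw [Finset.card_compl, Nat.cast_sub (Finset.card_le_univ _), Nat.card_eq_fintype_card]
  rw [fixedPairs_of_involutive hσ, Finset.card_union_of_disjoint hdisj, Finset.offDiag_card,
    Finset.card_image_of_injective _ fun a b h => congrArg Prod.fst h, Nat.cast_add,
    Nat.cast_sub (Nat.le_mul_self _), Nat.cast_mul, hcompl]
  ring

theorem isSwap_of_card_fixedPairs_eq (h5 : 5 ≤ Nat.card α) {σ τ : Equiv.Perm α}
    (hσ : Function.Involutive σ) (hτ : τ.IsSwap)
    (h : (fixedPairs σ).card = (fixedPairs τ).card) : σ.IsSwap := by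
  have hτ_inv : Function.Involutive τ := by
    obtain ⟨a, b, -, rfl⟩ := hτ
    exact Equiv.swap_apply_self a b
  have hle : σ.support.card ≤ Nat.card α := by
    rw [Nat.card_eq_fintype_card]
    exact Finset.card_le_univ _
  have hcard := congrArg (Nat.cast : ℕ → ℤ) h
  rw [card_fixedPairs_of_involutive hσ, card_fixedPairs_of_involutive hτ_inv,
    Equiv.Perm.card_support_eq_two.2 hτ] at hcard
  have hprod : ((σ.support.card : ℤ) - 2) * (2 * Nat.card α - σ.support.card - 4) = 0 := by
    push_cast at hcard
    linear_combination -hcard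
  rw [← Equiv.Perm.card_support_eq_two]
  obtain h | h := mul_eq_zero.1 hprod <;> omega

end Permutations

theorem exists_mem_iInf_apply_eq_and_eq {α G ι : Type*} [Group G] {ρ : G →* Equiv.Perm α}
    (hρ : Function.Surjective ρ) (h5 : 5 ≤ Nat.card α) {N : ι → Subgroup G}
    (hN : ∀ i, (N i).Normal) {s : Finset ι} (hs : ∀ i ∈ s, ¬ N i ≤ ρ.ker) {a b c d : α}
    (hab : a ≠ b) (hcd : c ≠ d) :
    ∃ g, (∀ i ∈ s, g ∈ N i) ∧ ρ g a = c ∧ ρ g b = d := by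
  classical
  have : Finite α := Nat.finite_of_card_ne_zero (by omega)
  have := Fintype.ofFinite α
  have alternating_le (i : ι) (hi : i ∈ s) : alternatingGroup α ≤ (N i).map ρ := by
    have : ((N i).map ρ).Normal := (hN i).map ρ hρ
    refine Equiv.Perm.alternatingGroup_le_of_normal h5 ?_
    rw [Subgroup.nontrivial_iff_ne_bot, Ne, Subgroup.map_eq_bot_iff]
    exact hs i hi
  have hle := le_map_iInf_of_le_commutator (commutator_alternatingGroup_eq_self h5).ge
    (by rw [MonoidHom.range_eq_top.2 hρ]; exact le_top) hN alternating_le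
  obtain ⟨σ, hσ, hσ'⟩ := exists_mem_alternatingGroup_apply_eq_and_eq (by omega) hab hcd
  obtain ⟨g, hg, rfl⟩ := hle hσ
  simp only [Subgroup.coe_iInf, Set.mem_iInter, SetLike.mem_coe] at hg
  exact ⟨g, hg, hσ'⟩

/-- A surjection `ρ` from `G` onto the symmetric group of `α` whose kernel has first cohomology the
permutation module on unordered pairs of points, as for braid groups: the winding numbers `w i j`
and the pure elements `A i j`, both indexed by ordered pairs of distinct points but depending only
on the unordered pair, are dual bases. -/
structure PairWinding (α G : Type*) [Fintype α] [DecidableEq α] [Group G] where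
  ρ : G →* Equiv.Perm α
  ρ_surjective : Function.Surjective ρ
  w : α → α → G → ℤ
  additiveOn_w : ∀ i j, AdditiveOn ρ.ker (w i j)
  w_conj : ∀ i j g, ∀ x ∈ ρ.ker, w (ρ g i) (ρ g j) (g * x * g⁻¹) = w i j x
  A : α → α → G
  A_mem_ker : ∀ i j, A i j ∈ ρ.ker
  w_A : ∀ i j k l, i ≠ j → k ≠ l → w i j (A k l) = if s(i, j) = s(k, l) then 1 else 0
  two_mul_eq_sum : ∀ f : G → ℤ, AdditiveOn ρ.ker f → ∀ x ∈ ρ.ker,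
    2 * f x = ∑ p ∈ Finset.univ.offDiag, f (A p.1 p.2) * w p.1 p.2 x

namespace PairWinding

variable {α G : Type*} [Fintype α] [DecidableEq α] [Group G] (D : PairWinding α G) {f f' : G → ℤ}
  {Ψ : MulAut G}

theorem apply_eq_of_w_eq (hf : AdditiveOn D.ρ.ker f) {x y : G} (hx : x ∈ D.ρ.ker)
    (hy : y ∈ D.ρ.ker) (h : ∀ i j, i ≠ j → D.w i j x = D.w i j y) : f x = f y := by
  have htwo : 2 * f x = 2 * f y := by
    rw [D.two_mul_eq_sum f hf x hx, D.two_mul_eq_sum f hf y hy]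
    exact Finset.sum_congr rfl fun p hp => by rw [h p.1 p.2 (Finset.mem_offDiag.1 hp).2.2]
  omega

theorem eqOn_ker_of_eq_A (hf : AdditiveOn D.ρ.ker f) (hf' : AdditiveOn D.ρ.ker f')
    (h : ∀ i j, i ≠ j → f (D.A i j) = f' (D.A i j)) {x : G} (hx : x ∈ D.ρ.ker) : f x = f' x := by
  have htwo : 2 * f x = 2 * f' x := by
    rw [D.two_mul_eq_sum f hf x hx, D.two_mul_eq_sum f' hf' x hx]
    exact Finset.sum_congr rfl fun p hp => by rw [h p.1 p.2 (Finset.mem_offDiag.1 hp).2.2]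
  omega

theorem apply_A_comm (hf : AdditiveOn D.ρ.ker f) {i j : α} (hij : i ≠ j) :
    f (D.A i j) = f (D.A j i) :=
  D.apply_eq_of_w_eq hf (D.A_mem_ker i j) (D.A_mem_ker j i) fun k l hkl => by
    rw [D.w_A k l i j hkl hij, D.w_A k l j i hkl hij.symm, Sym2.eq_swap (a := i)]

theorem conj_mem_ker (g : G) {x : G} (hx : x ∈ D.ρ.ker) : g * x * g⁻¹ ∈ D.ρ.ker :=
  D.ρ.normal_ker.conj_mem x hx g

theorem apply_conj_A (hf : AdditiveOn D.ρ.ker f) (g : G) {i j : α} (hij : i ≠ j) :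
    f (g * D.A i j * g⁻¹) = f (D.A (D.ρ g i) (D.ρ g j)) := by
  refine D.apply_eq_of_w_eq hf (D.conj_mem_ker g (D.A_mem_ker i j)) (D.A_mem_ker _ _)
    fun k l hkl => ?_
  obtain ⟨k, rfl⟩ := (D.ρ g).surjective k
  obtain ⟨l, rfl⟩ := (D.ρ g).surjective l
  have hinj := (D.ρ g).injective
  rw [D.w_conj k l g _ (D.A_mem_ker i j), D.w_A k l i j (ne_of_apply_ne _ hkl) hij,
    D.w_A _ _ _ _ hkl (hinj.ne hij)]
  exact if_congr (Sym2.map.injective hinj).eq_iff.symm rfl rfl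

theorem sum_w_conj_A (g : G) :
    ∑ p ∈ Finset.univ.offDiag, D.w p.1 p.2 (g * D.A p.1 p.2 * g⁻¹) =
      (fixedPairs (D.ρ g)).card := by
  rw [fixedPairs, Finset.card_filter, Nat.cast_sum]
  refine Finset.sum_congr rfl fun p hp => ?_
  have hp : p.1 ≠ p.2 := (Finset.mem_offDiag.1 hp).2.2
  rw [D.apply_conj_A (D.additiveOn_w _ _) g hp, D.w_A _ _ _ _ hp ((D.ρ g).injective.ne hp)]
  simp only [eq_comm, Nat.cast_ite, Nat.cast_one, Nat.cast_zero]

/-- Both sides are traces on the permutation module, of `x` and of its conjugate by `Ψ`. -/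
theorem card_fixedPairs_apply (hΨ : ∀ x, Ψ x ∈ D.ρ.ker ↔ x ∈ D.ρ.ker) (x : G) :
    (fixedPairs (D.ρ (Ψ x))).card = (fixedPairs (D.ρ x)).card := by
  have hΨ' (y : G) : Ψ⁻¹ y ∈ D.ρ.ker ↔ y ∈ D.ρ.ker := by rw [← hΨ, MulAut.apply_inv_self]
  have trace_left (i j : α) : 2 * D.w i j (Ψ x * D.A i j * (Ψ x)⁻¹) =
      ∑ q ∈ Finset.univ.offDiag,
        D.w i j (Ψ (x * D.A q.1 q.2 * x⁻¹)) * D.w q.1 q.2 (Ψ⁻¹ (D.A i j)) := by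
    rw [← D.two_mul_eq_sum (fun y => D.w i j (Ψ (x * y * x⁻¹)))
      (((D.additiveOn_w i j).comp_hom Ψ.toMonoidHom fun y => (hΨ y).2).comp_conj x)
      _ ((hΨ' _).2 (D.A_mem_ker i j))]
    simp
  have trace_right (i j : α) : 2 * D.w i j (x * D.A i j * x⁻¹) =
      ∑ q ∈ Finset.univ.offDiag,
        D.w i j (Ψ⁻¹ (D.A q.1 q.2)) * D.w q.1 q.2 (Ψ (x * D.A i j * x⁻¹)) := by
    rw [← D.two_mul_eq_sum (fun y => D.w i j (Ψ⁻¹ y))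
      ((D.additiveOn_w i j).comp_hom Ψ⁻¹.toMonoidHom fun y => (hΨ' y).2)
      _ ((hΨ _).2 (D.conj_mem_ker x (D.A_mem_ker i j)))]
    simp
  have htwo : (2 * (fixedPairs (D.ρ (Ψ x))).card : ℤ) = 2 * (fixedPairs (D.ρ x)).card := by
    simp only [← sum_w_conj_A, Finset.mul_sum, trace_left, trace_right]
    rw [Finset.sum_comm]
    simp only [mul_comm]
  omega

theorem ρ_apply_eq_iff (hΨ : ∀ x, Ψ x ∈ D.ρ.ker ↔ x ∈ D.ρ.ker) (x y : G) :
    D.ρ (Ψ x) = D.ρ (Ψ y) ↔ D.ρ x = D.ρ y := by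
  rw [MonoidHom.eq_iff, MonoidHom.eq_iff, ← hΨ (y⁻¹ * x), map_mul, map_inv]

theorem isSwap_ρ_apply (h5 : 5 ≤ Nat.card α) (hΨ : ∀ x, Ψ x ∈ D.ρ.ker ↔ x ∈ D.ρ.ker) {x : G}
    (hx : (D.ρ x).IsSwap) : (D.ρ (Ψ x)).IsSwap := by
  refine isSwap_of_card_fixedPairs_eq h5 (fun i => ?_) hx (D.card_fixedPairs_apply hΨ x)
  have hsq : D.ρ (x * x) = D.ρ 1 := by
    obtain ⟨a, b, -, hab⟩ := hx
    rw [map_mul, hab, Equiv.swap_mul_self, map_one]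
  rw [← Equiv.Perm.mul_apply, ← map_mul, ← map_mul, (D.ρ_apply_eq_iff hΨ _ _).2 hsq, map_one,
    map_one, Equiv.Perm.one_apply]

/-- The total winding number of the strand `k` with all other strands. -/
def strand (k : α) (x : G) : ℤ := ∑ e ∈ {k}ᶜ, D.w k e x

theorem additiveOn_strand (k : α) : AdditiveOn D.ρ.ker (D.strand k) :=
  AdditiveOn.sum fun e _ => D.additiveOn_w k e

theorem strand_conj (k : α) (g : G) {x : G} (hx : x ∈ D.ρ.ker) :
    D.strand (D.ρ g k) (g * x * g⁻¹) = D.strand k x :=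
  (Finset.sum_equiv (D.ρ g) (by simp) fun e _ => (D.w_conj k e g x hx).symm).symm

theorem strand_A (k : α) {i j : α} (hij : i ≠ j) :
    D.strand k (D.A i j) = (if k = i then 1 else 0) + if k = j then 1 else 0 := by
  have hsum : D.strand k (D.A i j) = ∑ e ∈ {k}ᶜ, if s(k, e) = s(i, j) then 1 else 0 :=
    Finset.sum_congr rfl fun e he => D.w_A k e i j (by simpa [eq_comm] using he) hij
  rw [hsum]
  rcases eq_or_ne k i with rfl | hki
  · simp [hij, hij.symm]
  · rcases eq_or_ne k j with rfl | hkj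
    · simp [hij, hki]
    · simp [hki, hkj]

/-- The difference of two strand windings; as `k ≠ l` vary these are the roots of type `A`. -/
def root (k l : α) (x : G) : ℤ := D.strand k x - D.strand l x

theorem additiveOn_root (k l : α) : AdditiveOn D.ρ.ker (D.root k l) :=
  (D.additiveOn_strand k).sub (D.additiveOn_strand l)

theorem root_swap (k l : α) (x : G) : D.root l k x = -D.root k l x :=
  (neg_sub _ _).symm

theorem root_conj (k l : α) (g : G) {x : G} (hx : x ∈ D.ρ.ker) :
    D.root (D.ρ g k) (D.ρ g l) (g * x * g⁻¹) = D.root k l x := by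
  rw [root, root, D.strand_conj k g hx, D.strand_conj l g hx]

theorem root_A_eq_one {a b e : α} (hab : a ≠ b) (hea : e ≠ a) (heb : e ≠ b) :
    D.root a b (D.A a e) = 1 := by
  rw [root, D.strand_A a hea.symm, D.strand_A b hea.symm]
  simp [hab.symm, hea.symm, heb.symm]

theorem ρ_apply_fixes_of_ρ_eq_swap (h5 : 5 ≤ Nat.card α) (hΨ : ∀ x, Ψ x ∈ D.ρ.ker ↔ x ∈ D.ρ.ker)
    {a b k l u v : α} (hab : a ≠ b) (hkl : k ≠ l) (huv : u ≠ v) (hu : u ∉ ({k, l} : Set α))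
    (hv : v ∉ ({k, l} : Set α)) {x z : G} (hx : D.ρ x = Equiv.swap k l)
    (hΨx : D.ρ (Ψ x) = Equiv.swap a b) (hz : D.ρ z = Equiv.swap u v) :
    D.ρ (Ψ z) a = a ∧ D.ρ (Ψ z) b = b := by
  simp only [Set.mem_insert_iff, Set.mem_singleton_iff, not_or] at hu hv
  refine apply_eq_self_of_commute_swap (D.isSwap_ρ_apply h5 hΨ ⟨u, v, huv, hz⟩) hab ?_ ?_
  · have hdisj : (Equiv.swap u v).Disjoint (Equiv.swap k l) :=
      Equiv.Perm.disjoint_swap_swap (by simp [*])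
    have hzx : D.ρ (z * x) = D.ρ (x * z) := by
      rw [map_mul, map_mul, hz, hx, hdisj.commute.eq]
    simpa only [commute_iff_eq, map_mul, hΨx] using (D.ρ_apply_eq_iff hΨ _ _).2 hzx
  · rw [← hΨx, Ne, D.ρ_apply_eq_iff hΨ, hz, hx]
    intro h
    have := DFunLike.congr_fun h u
    rw [Equiv.swap_apply_left, Equiv.swap_apply_of_ne_of_ne hu.1 hu.2] at this
    exact huv this.symm

theorem exists_root_apply_eq_mul (h5 : 5 ≤ Nat.card α) (hΨ : ∀ x, Ψ x ∈ D.ρ.ker ↔ x ∈ D.ρ.ker)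
    {a b : α} (hab : a ≠ b) :
    ∃ k l, k ≠ l ∧ ∃ c, ∀ x ∈ D.ρ.ker, D.root a b (Ψ x) = c * D.root k l x := by
  obtain ⟨y, hy⟩ := D.ρ_surjective (Equiv.swap a b)
  obtain ⟨x, rfl⟩ := Ψ.surjective y
  have hΨ' (z : G) : Ψ⁻¹ z ∈ D.ρ.ker ↔ z ∈ D.ρ.ker := by rw [← hΨ, MulAut.apply_inv_self]
  obtain ⟨k, l, hkl, hx⟩ : (D.ρ x).IsSwap := by
    simpa using D.isSwap_ρ_apply h5 hΨ' (x := Ψ x) ⟨a, b, hab, hy⟩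
  have hf : AdditiveOn D.ρ.ker fun z => D.root a b (Ψ z) :=
    (D.additiveOn_root a b).comp_hom Ψ.toMonoidHom fun z => (hΨ z).2
  have conj_A (z : G) {i j : α} (hij : i ≠ j) : D.root a b (Ψ (D.A (D.ρ z i) (D.ρ z j))) =
      D.root a b (Ψ z * Ψ (D.A i j) * (Ψ z)⁻¹) := by
    rw [← D.apply_conj_A hf z hij, map_mul, map_mul, map_inv]
  obtain ⟨c, hc⟩ := exists_eq_mul_of_antisymm (F := fun i j => D.root a b (Ψ (D.A i j)))
    (by omega) hkl (fun i j hij => D.apply_A_comm hf hij)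
    (fun i j hij => by
      have := D.root_conj a b (Ψ x) ((hΨ _).2 (D.A_mem_ker i j))
      rw [hy, Equiv.swap_apply_left, Equiv.swap_apply_right, D.root_swap] at this
      rw [← hx, conj_A x hij, ← this, neg_neg])
    (fun u v huv hu hv i j hij => by
      obtain ⟨z, hz⟩ := D.ρ_surjective (Equiv.swap u v)
      have hfix := D.ρ_apply_fixes_of_ρ_eq_swap h5 hΨ hab hkl huv hu hv hx hy hz
      have := D.root_conj a b (Ψ z) ((hΨ _).2 (D.A_mem_ker i j))
      rw [hfix.1, hfix.2] at this
      rw [← hz, conj_A z hij, this])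
  refine ⟨k, l, hkl, c, fun z hz => ?_⟩
  refine D.eqOn_ker_of_eq_A hf ((D.additiveOn_root k l).zsmul c) (fun i j hij => ?_) hz
  rw [hc i j hij, root, D.strand_A k hij, D.strand_A l hij, smul_eq_mul]

theorem exists_root_apply_eq (h5 : 5 ≤ Nat.card α) (hΨ : ∀ x, Ψ x ∈ D.ρ.ker ↔ x ∈ D.ρ.ker)
    {a b : α} (hab : a ≠ b) :
    ∃ k l, k ≠ l ∧ ∀ x ∈ D.ρ.ker, D.root a b (Ψ x) = D.root k l x := by
  obtain ⟨k, l, hkl, c, hc⟩ := D.exists_root_apply_eq_mul h5 hΨ hab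
  obtain ⟨e, hea, heb⟩ := exists_ne_and_ne (by omega) a b
  have hunit : 1 = c * D.root k l (Ψ⁻¹ (D.A a e)) := by
    rw [← hc _ (by rw [← hΨ, MulAut.apply_inv_self]; exact D.A_mem_ker a e),
      MulAut.apply_inv_self, D.root_A_eq_one hab hea heb]
  rcases Int.eq_one_or_neg_one_of_mul_eq_one hunit.symm with rfl | rfl
  · exact ⟨k, l, hkl, fun x hx => by rw [hc x hx, one_mul]⟩
  · exact ⟨l, k, hkl.symm, fun x hx => by rw [hc x hx, D.root_swap k l, neg_one_mul]⟩

theorem exists_root_conj_mul_pow_apply_eq (h5 : 5 ≤ Nat.card α) {φ : MulAut G} {p : ℕ}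
    (hp : 0 < p) (hφp : ∀ x, (φ ^ p) x ∈ D.ρ.ker ↔ x ∈ D.ρ.ker)
    (hmin : ∀ k, 0 < k → k < p → ¬ D.ρ.ker.comap (φ ^ k).toMonoidHom ≤ D.ρ.ker) {a b : α}
    (hab : a ≠ b) : ∃ g, (∀ j, 0 < j → j < p → D.ρ ((φ ^ j) g) = 1) ∧
      ∀ x ∈ D.ρ.ker, D.root a b (((MulAut.conj g * φ) ^ p) x) = D.root a b x := by
  have hφp' (x : G) : (φ ^ p)⁻¹ x ∈ D.ρ.ker ↔ x ∈ D.ρ.ker := by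
    rw [← hφp, MulAut.apply_inv_self]
  obtain ⟨k, l, hkl, hroot⟩ := D.exists_root_apply_eq h5 hφp' hab
  obtain ⟨g, hg, rfl, rfl⟩ := exists_mem_iInf_apply_eq_and_eq D.ρ_surjective h5
    (N := fun j => D.ρ.ker.comap (φ ^ j).toMonoidHom) (s := Finset.Ioo 0 p)
    (fun _ => D.ρ.normal_ker.comap _) (by simpa using hmin) hkl hab
  have hg (j : ℕ) (hj : 0 < j) (hjp : j < p) : D.ρ ((φ ^ j) g) = 1 :=
    hg j (Finset.mem_Ioo.2 ⟨hj, hjp⟩)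
  refine ⟨g, hg, fun x hx => ?_⟩
  obtain ⟨h, hρh, hh⟩ := conj_mul_pow_eq hg hp le_rfl
  have hxp := (hφp x).2 hx
  rw [hh, MulAut.mul_apply, MulAut.conj_apply, ← hρh, D.root_conj k l h hxp, hρh, ← hroot _ hxp,
    MulAut.inv_apply_self]

/-- As the intermediate powers of `φ` do not preserve the kernel, `d` can be chosen in their kernels
so as to swap `a` and `b`; then only one term of the orbit sum at `⁅d, c⁆` survives, for `c` a power
of `A a e`. -/
theorem exists_sum_root_ne_zero (h5 : 5 ≤ Nat.card α) {φ : MulAut G} {p : ℕ} (hp : 0 < p)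
    (hmin : ∀ k, 0 < k → k < p → ¬ D.ρ.ker.comap (φ ^ k).toMonoidHom ≤ D.ρ.ker) {g : G}
    (hg : ∀ j, 0 < j → j < p → D.ρ ((φ ^ j) g) = 1) {a b : α} (hab : a ≠ b) :
    ∃ y, (∀ j, ((MulAut.conj g * φ) ^ j) y ∈ D.ρ.ker) ∧
      ∑ j ∈ Finset.range p, D.root a b (((MulAut.conj g * φ) ^ j) y) ≠ 0 := by
  set ψ := MulAut.conj g * φ
  obtain ⟨d, hd, hda, hdb⟩ := exists_mem_iInf_apply_eq_and_eq D.ρ_surjective h5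
    (N := fun j => D.ρ.ker.comap (φ ^ j).toMonoidHom) (s := Finset.Ioo 0 p)
    (fun _ => D.ρ.normal_ker.comap _) (by simpa using hmin) hab hab.symm
  obtain ⟨e, hea, heb⟩ := exists_ne_and_ne (by omega) a b
  let m := Nat.card (Equiv.Perm α)
  let c := D.A a e ^ m
  have hc (j : ℕ) : (ψ ^ j) c ∈ D.ρ.ker := by
    rw [MonoidHom.mem_ker, map_pow, map_pow, pow_card_eq_one']
  have hc₀ : c ∈ D.ρ.ker := hc 0
  have root_commutator : D.root a b ⁅d, c⁆ = -(2 * m) := by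
    have hconj := D.root_conj b a d hc₀
    rw [hda, hdb, D.root_swap a b] at hconj
    rw [commutatorElement_def, (D.additiveOn_root a b).map_mul_inv (D.conj_mem_ker d hc₀) hc₀,
      hconj, (D.additiveOn_root a b).map_pow (D.A_mem_ker a e), D.root_A_eq_one hab hea heb,
      nsmul_one]
    ring
  refine ⟨⁅d, c⁆, fun j => ?_, ?_⟩
  · rw [map_commutatorElement, commutatorElement_def]
    exact mul_mem (D.conj_mem_ker _ (hc j)) (inv_mem (hc j))
  · rw [Finset.sum_eq_single_of_mem 0 (Finset.mem_range.2 hp) fun j hj hj0 => ?_]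
    · rw [pow_zero, MulAut.one_apply, root_commutator]
      have : 0 < m := Nat.card_pos
      omega
    · have hj0 := Nat.pos_of_ne_zero hj0
      have hjp := Finset.mem_range.1 hj
      rw [map_commutatorElement]
      exact (D.additiveOn_root a b).map_commutator ((conj_mul_pow_mem_ker_iff hg hj0 hjp.le d).2
        (hd j (Finset.mem_Ioo.2 ⟨hj0, hjp⟩))) (hc j)

theorem propertyRInfinity [Group.FG G] (D : PairWinding α G) (h5 : 5 ≤ Nat.card α) :
    PropertyRInfinity G := by
  intro (φ : MulAut G)
  obtain ⟨p, hp, hφp, hmin⟩ := exists_pow_mem_ker_iff D.ρ φ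
  have : Nontrivial α := Finite.one_lt_card_iff_nontrivial.1 (by omega)
  obtain ⟨a, b, hab⟩ := exists_pair_ne α
  obtain ⟨g, hg, hinv⟩ := D.exists_root_conj_mul_pow_apply_eq h5 hp hφp hmin hab
  obtain ⟨y, hy, hsum⟩ := D.exists_sum_root_ne_zero h5 hp hmin hg hab
  refine .of_conj_mul g (reidemeisterInfinite_of_sum_iterates_ne_zero (D.additiveOn_root a b) hp
    (fun x hx => ?_) hinv (fun j _ => hy j) hsum)
  exact (conj_mul_pow_mem_ker_iff hg hp le_rfl x).2 ((hφp x).2 hx)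

end PairWinding

section Winding

theorem mulAutArrow_apply_smul {G A M : Type*} [Group G] [MulAction G A] [Monoid M] (g : G)
    (F : A → M) (a : A) : mulAutArrow g F (g • a) = F a :=
  congrArg F (inv_smul_smul g a)

theorem mulAutArrow_mulSingle {G A M : Type*} [Group G] [MulAction G A] [Monoid M] [DecidableEq A]
    (g : G) (a : A) (c : M) : mulAutArrow g (Pi.mulSingle a c) = Pi.mulSingle (g • a) c := by
  funext b
  obtain ⟨b, rfl⟩ := MulAction.surjective g b
  simp only [mulAutArrow_apply_smul, Pi.mulSingle_apply, (MulAction.injective g).eq_iff]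

/-- Permutations of `α` together with an integer for each ordered pair of points. For the image of
a braid, the integer of `(i, j)` counts the crossings in which the strands ending at `i` and `j`
meet in this order. -/
abbrev WindingGroup (α : Type*) : Type _ :=
  (α × α → Multiplicative ℤ) ⋊[mulAutArrow] Equiv.Perm α

variable {α : Type*}

/-- The integer attached by `g` to the pair `(i, j)`. -/
def winding (i j : α) (g : WindingGroup α) : ℤ := (g.left (i, j)).toAdd

theorem winding_mul_of_right_eq_one (i j : α) {x : WindingGroup α} (hx : x.right = 1)
    (y : WindingGroup α) : winding i j (x * y) = winding i j x + winding i j y := by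
  rw [winding, SemidirectProduct.mul_left, hx, map_one]
  rfl

theorem winding_conj (i j : α) (g : WindingGroup α) {x : WindingGroup α} (hx : x.right = 1) :
    winding (g.right i) (g.right j) (g * x * g⁻¹) = winding i j x := by
  have hleft : (g * x * g⁻¹).left = mulAutArrow g.right x.left := by
    simp [hx, mul_comm, -mulAutArrow_apply_apply]
  rw [winding, hleft]
  exact congrArg Multiplicative.toAdd (mulAutArrow_apply_smul g.right x.left (i, j))

variable [DecidableEq α] {x y z w : α}

/-- A single crossing of the strands `x` and `y`. -/
def windingSwap (x y : α) : WindingGroup α :=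
  ⟨Pi.mulSingle (x, y) (Multiplicative.ofAdd 1), Equiv.swap x y⟩

theorem windingSwap_braid (hxy : x ≠ y) (hyz : y ≠ z) (hxz : x ≠ z) :
    windingSwap x y * windingSwap y z * windingSwap x y =
      windingSwap y z * windingSwap x y * windingSwap y z := by
  refine SemidirectProduct.ext ?_ ?_
  · simp [windingSwap, mulAutArrow_mulSingle, -mulAutArrow_apply_apply,
      Equiv.swap_apply_of_ne_of_ne, *, Ne.symm, mul_comm, mul_left_comm]
  · simp only [windingSwap, SemidirectProduct.mul_right]
    rw [Equiv.swap_mul_swap_mul_swap hxy hxz, Equiv.swap_comm x y, Equiv.swap_comm y z,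
      Equiv.swap_mul_swap_mul_swap hyz.symm hxz.symm, Equiv.swap_comm]

theorem commute_windingSwap (h : [x, y, z, w].Nodup) :
    Commute (windingSwap x y) (windingSwap z w) := by
  refine SemidirectProduct.ext ?_ (Equiv.Perm.disjoint_swap_swap h).commute
  simp only [List.nodup_cons, List.mem_cons, not_or, List.not_mem_nil] at h
  simp [windingSwap, mulAutArrow_mulSingle, -mulAutArrow_apply_apply,
    Equiv.swap_apply_of_ne_of_ne, h, mul_comm, Ne.symm, Ne]

theorem windingSwap_sq_right (x y : α) : (windingSwap x y ^ 2).right = 1 := by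
  rw [pow_two, SemidirectProduct.mul_right, windingSwap, Equiv.swap_mul_self]

theorem winding_windingSwap_sq (hxy : x ≠ y) (i j : α) :
    winding i j (windingSwap x y ^ 2) = if s(i, j) = s(x, y) then 1 else 0 := by
  have hleft : (windingSwap x y ^ 2).left =
      Pi.mulSingle (x, y) (Multiplicative.ofAdd 1) * Pi.mulSingle (y, x) (.ofAdd 1) := by
    simp [windingSwap, pow_two, mulAutArrow_mulSingle, -mulAutArrow_apply_apply]
  rw [winding, hleft]
  simp only [Pi.mul_apply, Pi.mulSingle_apply, Prod.mk.injEq, Sym2.eq_iff]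
  by_cases hi : i = x ∧ j = y
  · simp [hi, hxy]
  · by_cases hj : i = y ∧ j = x <;> simp [hi, hj, hxy.symm]

theorem winding_conj_windingSwap_sq (hxy : x ≠ y) (i j : α) (g : WindingGroup α) :
    winding i j (g * windingSwap x y ^ 2 * g⁻¹) =
      if s(i, j) = s(g.right x, g.right y) then 1 else 0 := by
  obtain ⟨i, rfl⟩ := g.right.surjective i
  obtain ⟨j, rfl⟩ := g.right.surjective j
  rw [winding_conj i j g (windingSwap_sq_right x y), winding_windingSwap_sq hxy]
  exact if_congr (Sym2.map.injective g.right.injective).eq_iff.symm rfl rfl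

theorem sum_offDiag_mul_ite_eq [Fintype α] (F : α → α → ℤ) (hxy : x ≠ y) :
    ∑ p ∈ Finset.univ.offDiag, F p.1 p.2 * (if s(p.1, p.2) = s(x, y) then 1 else 0) =
      F x y + F y x := by
  have hpair : Finset.univ.offDiag.filter (fun p => s(p.1, p.2) = s(x, y)) = {(x, y), (y, x)} := by
    ext ⟨i, j⟩
    simp only [Finset.mem_filter, Finset.mem_offDiag, Finset.mem_univ, true_and, Sym2.eq_iff,
      Finset.mem_insert, Finset.mem_singleton, Prod.mk.injEq]
    refine and_iff_right_of_imp ?_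
    rintro (⟨rfl, rfl⟩ | ⟨rfl, rfl⟩)
    exacts [hxy, hxy.symm]
  simp only [mul_ite, mul_one, mul_zero]
  rw [← Finset.sum_filter, hpair, Finset.sum_pair (by simp [hxy])]

end Winding

namespace PairWinding

variable {α G : Type*} [Group G]

theorem apply_conj_eq_of_ρ_eq {ρ : G →* Equiv.Perm α} {u v : α} {s : G} (hs : s ∈ ρ.ker)
    (hstab : ∀ g, ρ g u = u → ρ g v = v → g ∈ Subgroup.centralizer {s} ⊔ ρ.ker) {f : G → ℤ}
    (hf : AdditiveOn ρ.ker f) {g h : G} (hu : ρ g u = ρ h u) (hv : ρ g v = ρ h v) :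
    f (g * s * g⁻¹) = f (h * s * h⁻¹) := by
  have hmem : h⁻¹ * g ∈ Subgroup.centralizer {s} ⊔ ρ.ker :=
    hstab _ (by simp [hu]) (by simp [hv])
  simpa [mul_assoc] using (hf.comp_conj h).apply_conj_eq_of_mem_centralizer_sup hs hmem

variable {θ : G →* WindingGroup α} {ρ : G →* Equiv.Perm α}

theorem additiveOn_winding (hθ : ∀ g, (θ g).right = ρ g) (i j : α) :
    AdditiveOn ρ.ker fun x => winding i j (θ x) := fun x hx y _ => by
  simp only [map_mul]
  exact winding_mul_of_right_eq_one i j ((hθ x).trans hx) (θ y)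

variable [DecidableEq α] {u v : α} {τ : G}

theorem winding_map_conj_sq (hθ : ∀ g, (θ g).right = ρ g) (huv : u ≠ v)
    (hτ : θ τ = windingSwap u v) (i j : α) (g : G) :
    winding i j (θ (g * τ ^ 2 * g⁻¹)) = if s(i, j) = s(ρ g u, ρ g v) then 1 else 0 := by
  rw [map_mul, map_mul, map_inv, map_pow, hτ, winding_conj_windingSwap_sq huv, hθ]

variable [Fintype α]

theorem two_mul_eq_sum_of_hom (hθ : ∀ g, (θ g).right = ρ g) (huv : u ≠ v)
    (hτ : θ τ = windingSwap u v)
    (hstab : ∀ g, ρ g u = u → ρ g v = v → g ∈ Subgroup.centralizer {τ ^ 2} ⊔ ρ.ker)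
    (hext : ∀ f : G → ℤ, AdditiveOn ρ.ker f → (∀ g, f (g * τ ^ 2 * g⁻¹) = 0) →
      ∀ x ∈ ρ.ker, f x = 0)
    {L : α → α → G} (hL : ∀ i j, i ≠ j → ρ (L i j) u = i ∧ ρ (L i j) v = j) {f : G → ℤ}
    (hf : AdditiveOn ρ.ker f) {x : G} (hx : x ∈ ρ.ker) :
    2 * f x = ∑ p ∈ Finset.univ.offDiag,
      f (L p.1 p.2 * τ ^ 2 * (L p.1 p.2)⁻¹) * winding p.1 p.2 (θ x) := by
  have hρτ : ρ τ = Equiv.swap u v := by rw [← hθ, hτ]; rfl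
  have hs : τ ^ 2 ∈ ρ.ker := by
    rw [MonoidHom.mem_ker, map_pow, hρτ, pow_two, Equiv.swap_mul_self]
  let F x := (2 : ℤ) • f x - ∑ p ∈ Finset.univ.offDiag,
    f (L p.1 p.2 * τ ^ 2 * (L p.1 p.2)⁻¹) • winding p.1 p.2 (θ x)
  have hF : AdditiveOn ρ.ker F :=
    (hf.zsmul 2).sub (.sum fun p _ => (additiveOn_winding hθ p.1 p.2).zsmul _)
  refine sub_eq_zero.1 (hext F hF (fun g => ?_) x hx)
  have huv_g : ρ g u ≠ ρ g v := (ρ g).injective.ne huv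
  obtain ⟨hLu, hLv⟩ := hL _ _ huv_g
  obtain ⟨hLv', hLu'⟩ := hL _ _ huv_g.symm
  have hA : f (L (ρ g u) (ρ g v) * τ ^ 2 * (L (ρ g u) (ρ g v))⁻¹) = f (g * τ ^ 2 * g⁻¹) :=
    apply_conj_eq_of_ρ_eq hs hstab hf hLu hLv
  have hA' : f (L (ρ g v) (ρ g u) * τ ^ 2 * (L (ρ g v) (ρ g u))⁻¹) = f (g * τ ^ 2 * g⁻¹) := by
    have hτ_conj : g * τ * τ ^ 2 * (g * τ)⁻¹ = g * τ ^ 2 * g⁻¹ := by group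
    rw [← hτ_conj]
    exact apply_conj_eq_of_ρ_eq hs hstab hf (by simp [hLv', hρτ]) (by simp [hLu', hρτ])
  simp only [F, winding_map_conj_sq hθ huv hτ, smul_eq_mul,
    sum_offDiag_mul_ite_eq (fun i j => f (L i j * τ ^ 2 * (L i j)⁻¹)) huv_g, hA, hA']
  ring

theorem nonempty_of_hom (hθ : ∀ g, (θ g).right = ρ g) (hρ : Function.Surjective ρ) (huv : u ≠ v)
    (hτ : θ τ = windingSwap u v)
    (hstab : ∀ g, ρ g u = u → ρ g v = v → g ∈ Subgroup.centralizer {τ ^ 2} ⊔ ρ.ker)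
    (hext : ∀ f : G → ℤ, AdditiveOn ρ.ker f → (∀ g, f (g * τ ^ 2 * g⁻¹) = 0) →
      ∀ x ∈ ρ.ker, f x = 0) : Nonempty (PairWinding α G) := by
  have exists_lift (i j : α) : ∃ g, i ≠ j → ρ g u = i ∧ ρ g v = j := by
    by_cases hij : i = j
    · exact ⟨1, fun h => (h hij).elim⟩
    · obtain ⟨σ, hσ⟩ := exists_perm_apply_eq_and_eq huv hij
      obtain ⟨g, rfl⟩ := hρ σ
      exact ⟨g, fun _ => hσ⟩
  choose L hL using exists_lift
  have hs : τ ^ 2 ∈ ρ.ker := by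
    rw [MonoidHom.mem_ker, ← hθ, map_pow, hτ, windingSwap_sq_right]
  exact ⟨{
    ρ := ρ
    ρ_surjective := hρ
    w := fun i j x => winding i j (θ x)
    additiveOn_w := additiveOn_winding hθ
    w_conj := fun i j g x hx => by
      rw [map_mul, map_mul, map_inv, ← hθ, winding_conj i j (θ g) ((hθ x).trans hx)]
    A := fun i j => L i j * τ ^ 2 * (L i j)⁻¹
    A_mem_ker := fun i j => ρ.normal_ker.conj_mem _ hs _
    w_A := fun i j k l _ hkl => by
      rw [winding_map_conj_sq hθ huv hτ, (hL k l hkl).1, (hL k l hkl).2]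
    two_mul_eq_sum := fun _ hf _ hx => two_mul_eq_sum_of_hom hθ huv hτ hstab hext hL hf hx }⟩

end PairWinding

/-- The relations of the braid group on `m + 1` strands, for the first `m` terms of `t`. -/
structure BraidRelations {Q : Type*} [Group Q] (m : ℕ) (t : ℕ → Q) : Prop where
  braid : ∀ i, i + 1 < m → t i * t (i + 1) * t i = t (i + 1) * t i * t (i + 1)
  comm : ∀ i j, i + 1 < j → j < m → Commute (t i) (t j)

/-- The standard parabolic subgroup generated by the first `k` terms of `t`. -/
def parabolic {Q : Type*} [Group Q] (t : ℕ → Q) (k : ℕ) : Subgroup Q :=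
  Subgroup.closure (t '' Set.Iio k)

section Parabolic

variable {Q H : Type*} [Group Q] [Group H] {t : ℕ → Q} {k l : ℕ}

theorem mem_parabolic (h : k < l) : t k ∈ parabolic t l :=
  Subgroup.subset_closure (Set.mem_image_of_mem t h)

theorem parabolic_le_iff {K : Subgroup Q} : parabolic t l ≤ K ↔ ∀ i < l, t i ∈ K :=
  (Subgroup.closure_le K).trans Set.forall_mem_image

theorem parabolic_mono (h : k ≤ l) : parabolic t k ≤ parabolic t l :=
  parabolic_le_iff.2 fun _ hi => mem_parabolic (hi.trans_le h)

theorem parabolic_zero : parabolic t 0 = ⊥ :=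
  le_bot_iff.1 (parabolic_le_iff.2 fun _ hi => absurd hi (Nat.not_lt_zero _))

theorem map_parabolic (f : Q →* H) (t : ℕ → Q) (k : ℕ) :
    (parabolic t k).map f = parabolic (fun i => f (t i)) k := by
  rw [parabolic, MonoidHom.map_closure, Set.image_image, parabolic]

end Parabolic

theorem isConj_of_braid {Q : Type*} [Group Q] {a c : Q} (h : a * c * a = c * a * c) :
    IsConj a c :=
  isConj_iff.2 ⟨a * c, mul_inv_eq_iff_eq_mul.2 (h.trans (mul_assoc c a c))⟩

namespace BraidRelations

variable {Q H : Type*} [Group Q] [Group H] {m k l : ℕ} {t : ℕ → Q}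

theorem map (h : BraidRelations m t) (f : Q →* H) : BraidRelations m fun i => f (t i) where
  braid i hi := by simp only [← map_mul, h.braid i hi]
  comm i j hij hj := (h.comm i j hij hj).map f

theorem isConj (h : BraidRelations m t) {i j : ℕ} (hi : i < m) (hj : j < m) :
    IsConj (t i) (t j) := by
  have isConj_zero (i : ℕ) (hi : i < m) : IsConj (t 0) (t i) := by
    induction i with
    | zero => exact IsConj.refl _
    | succ i ih => exact (ih (by omega)).trans (isConj_of_braid (h.braid i hi))
  exact (isConj_zero i hi).symm.trans (isConj_zero j hj)

theorem parabolic_le_centralizer (h : BraidRelations m t) (hk : k + 1 < m) :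
    parabolic t k ≤ Subgroup.centralizer {t (k + 1)} :=
  parabolic_le_iff.2 fun i hi =>
    Subgroup.mem_centralizer_singleton_iff.2 (h.comm i (k + 1) (by omega) hk)

end BraidRelations

section DoubleCoset

variable {Q : Type*} [Group Q] {m k l : ℕ} {t : ℕ → Q}

theorem mem_parabolic_or_mem_doubleCoset_of_forall (hsq : ∀ i ≤ k, t i * t i = 1)
    (hconj : ∀ b ∈ parabolic t k, t k * b * t k ∈ parabolic t k ∨
      t k * b * t k ∈ DoubleCoset.doubleCoset (t k) (parabolic t k) (parabolic t k))
    {x : Q} (hx : x ∈ parabolic t (k + 1)) :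
    x ∈ parabolic t k ∨ x ∈ DoubleCoset.doubleCoset (t k) (parabolic t k) (parabolic t k) := by
  simp only [DoubleCoset.mem_doubleCoset, SetLike.mem_coe] at hconj ⊢
  have mul_right (x : Q) (i : ℕ) (hi : i ≤ k)
      (hx : x ∈ parabolic t k ∨ ∃ a ∈ parabolic t k, ∃ b ∈ parabolic t k, x = a * t k * b) :
      x * t i ∈ parabolic t k ∨
        ∃ a ∈ parabolic t k, ∃ b ∈ parabolic t k, x * t i = a * t k * b := by
    rcases hi.lt_or_eq with hi | rfl
    · have hti : t i ∈ parabolic t k := mem_parabolic hi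
      rcases hx with hx | ⟨a, ha, b, hb, rfl⟩
      · exact .inl (mul_mem hx hti)
      · exact .inr ⟨a, ha, b * t i, mul_mem hb hti, mul_assoc _ _ _⟩
    · rcases hx with hx | ⟨a, ha, b, hb, rfl⟩
      · exact .inr ⟨x, hx, 1, one_mem _, (mul_one _).symm⟩
      · have hassoc : a * t i * b * t i = a * (t i * b * t i) := by simp only [mul_assoc]
        rw [hassoc]
        rcases hconj b hb with h | ⟨c, hc, d, hd, h⟩
        · exact .inl (mul_mem ha h)
        · exact .inr ⟨a * c, mul_mem ha hc, d, hd, by rw [h]; simp only [mul_assoc]⟩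
  induction hx using Subgroup.closure_induction_right with
  | one => exact .inl (one_mem _)
  | mul_right x _ y hy ih =>
    obtain ⟨i, hi, rfl⟩ := hy
    exact mul_right x i (Nat.lt_succ_iff.1 hi) ih
  | mul_inv_cancel x _ y hy ih =>
    obtain ⟨i, hi, rfl⟩ := hy
    have hik := Nat.lt_succ_iff.1 hi
    rw [inv_eq_of_mul_eq_one_left (hsq i hik)]
    exact mul_right x i hik ih

theorem BraidRelations.mem_parabolic_or_mem_doubleCoset (h : BraidRelations m t)
    (hsq : ∀ i < m, t i * t i = 1) (hk : k < m) {x : Q} (hx : x ∈ parabolic t (k + 1)) :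
    x ∈ parabolic t k ∨ x ∈ DoubleCoset.doubleCoset (t k) (parabolic t k) (parabolic t k) := by
  induction k generalizing x with
  | zero =>
    refine mem_parabolic_or_mem_doubleCoset_of_forall (fun i hi => hsq i (by omega))
      (fun b hb => ?_) hx
    rw [parabolic_zero, Subgroup.mem_bot] at hb
    exact .inl (by rw [hb, mul_one, hsq 0 hk]; exact one_mem _)
  | succ k ih =>
    refine mem_parabolic_or_mem_doubleCoset_of_forall (fun i hi => hsq i (by omega))
      (fun b hb => ?_) hx
    have hcomm {c : Q} (hc : c ∈ parabolic t k) : c * t (k + 1) = t (k + 1) * c :=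
      Subgroup.mem_centralizer_singleton_iff.1 (h.parabolic_le_centralizer hk hc)
    rcases ih (by omega) hb with hbk | hbk
    · exact .inl (by rw [← hcomm hbk, mul_assoc, hsq _ hk, mul_one]; exact hb)
    · obtain ⟨c, hc, d, hd, rfl⟩ := DoubleCoset.mem_doubleCoset.1 hbk
      have hck : c * t k ∈ parabolic t (k + 1) :=
        mul_mem (parabolic_mono k.le_succ hc) (mem_parabolic k.lt_succ_self)
      have hkd : t k * d ∈ parabolic t (k + 1) :=
        mul_mem (mem_parabolic k.lt_succ_self) (parabolic_mono k.le_succ hd)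
      refine .inr (DoubleCoset.mem_doubleCoset.2 ⟨c * t k, hck, t k * d, hkd, ?_⟩)
      calc t (k + 1) * (c * t k * d) * t (k + 1)
          = t (k + 1) * c * t k * (d * t (k + 1)) := by simp only [mul_assoc]
        _ = c * (t (k + 1) * t k * t (k + 1)) * d := by
          rw [← hcomm hc, hcomm hd]; simp only [mul_assoc]
        _ = c * t k * t (k + 1) * (t k * d) := by
          rw [← h.braid k hk]; simp only [mul_assoc]

end DoubleCoset

section Stabilizer

variable {α G : Type*} [Group G] [DecidableEq α] {m k l : ℕ} {t : ℕ → G}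
  {ρ : G →* Equiv.Perm α} {p : ℕ → α}

theorem apply_eq_of_mem_parabolic (hp : Set.InjOn p (Set.Iic m))
    (hρ : ∀ i < m, ρ (t i) = Equiv.swap (p i) (p (i + 1))) {x : G} (hx : x ∈ parabolic t l)
    {j : ℕ} (hlj : l < j) (hjm : j ≤ m) : ρ x (p j) = p j := by
  suffices h : parabolic t l ≤ (MulAction.stabilizer (Equiv.Perm α) (p j)).comap ρ from h hx
  refine parabolic_le_iff.2 fun i hi => ?_
  rw [Subgroup.mem_comap, MulAction.mem_stabilizer_iff, hρ i (by omega), Equiv.Perm.smul_def]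
  exact Equiv.swap_apply_of_ne_of_ne
    (hp.ne hjm (Set.mem_Iic.2 (by omega)) (by omega))
    (hp.ne hjm (Set.mem_Iic.2 (by omega)) (by omega))

theorem BraidRelations.mem_parabolic_of_apply_eq (h : BraidRelations m t)
    (hsq : ∀ i < m, t i * t i = 1) (hp : Set.InjOn p (Set.Iic m))
    (hρ : ∀ i < m, ρ (t i) = Equiv.swap (p i) (p (i + 1))) (hkl : k ≤ l) (hlm : l ≤ m)
    {x : G} (hx : x ∈ parabolic t l) (hfix : ∀ j, k < j → j ≤ l → ρ x (p j) = p j) :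
    x ∈ parabolic t k := by
  induction l, hkl using Nat.le_induction with
  | base => exact hx
  | succ l hkl ih =>
    rcases h.mem_parabolic_or_mem_doubleCoset hsq hlm hx with hx | hx
    · exact ih (by omega) hx fun j hkj hjl => hfix j hkj (by omega)
    · obtain ⟨a, ha, b, hb, rfl⟩ := DoubleCoset.mem_doubleCoset.1 hx
      have hax : ρ a (p l) = ρ a (p (l + 1)) := by
        rw [apply_eq_of_mem_parabolic hp hρ ha l.lt_succ_self hlm]
        simpa [apply_eq_of_mem_parabolic hp hρ hb l.lt_succ_self hlm, hρ l hlm]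
          using hfix (l + 1) (by omega) le_rfl
      exact absurd (hp (Set.mem_Iic.2 (by omega)) hlm ((ρ a).injective hax)) (by omega)

theorem BraidRelations.mem_parabolic_sup_of_apply_eq {N : Subgroup G} [N.Normal]
    (h : BraidRelations m t) (hsq : ∀ i < m, t i ^ 2 ∈ N) (htop : parabolic t m ⊔ N = ⊤)
    (hN : N ≤ ρ.ker) (hp : Set.InjOn p (Set.Iic m))
    (hρ : ∀ i < m, ρ (t i) = Equiv.swap (p i) (p (i + 1))) (hkm : k ≤ m) {g : G}
    (hfix : ∀ j, k < j → j ≤ m → ρ g (p j) = p j) : g ∈ parabolic t k ⊔ N := by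
  let π := QuotientGroup.mk' N
  have mem_sup_iff (k : ℕ) : g ∈ parabolic t k ⊔ N ↔ π g ∈ parabolic (fun i => π (t i)) k := by
    rw [← map_parabolic, ← Subgroup.mem_comap, Subgroup.comap_map_eq, QuotientGroup.ker_mk']
  have hsq' (i : ℕ) (hi : i < m) : π (t i) * π (t i) = 1 := by
    rw [← map_mul, ← pow_two]
    exact (QuotientGroup.eq_one_iff _).2 (hsq i hi)
  exact (mem_sup_iff k).2 <| (h.map π).mem_parabolic_of_apply_eq hsq' hp
    (ρ := QuotientGroup.lift N ρ hN) hρ hkm le_rfl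
    ((mem_sup_iff m).1 (htop ▸ Subgroup.mem_top g)) hfix

end Stabilizer

theorem braidRelations_windingSwap {α : Type*} [DecidableEq α] {m : ℕ} {p : ℕ → α}
    (hp : Set.InjOn p (Set.Iic m)) :
    BraidRelations m fun i => windingSwap (p i) (p (i + 1)) := by
  have hne {i j : ℕ} (hi : i ≤ m) (hj : j ≤ m) (hij : i ≠ j) : p i ≠ p j := hp.ne hi hj hij
  refine ⟨fun i hi => windingSwap_braid (hne ?_ ?_ ?_) (hne ?_ ?_ ?_) (hne ?_ ?_ ?_),
    fun i j hij hj => commute_windingSwap ?_⟩ <;> try omega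
  have hnodup : [i, i + 1, j, j + 1].Nodup := by simp; omega
  refine (List.nodup_map_iff_inj_on hnodup).2 fun a ha b hb hab => hp ?_ ?_ hab <;>
    simp only [List.mem_cons, List.not_mem_nil, or_false, Set.mem_Iic] at ha hb ⊢ <;> omega

theorem apply_conj_pow_eq_zero_of_isConj {G M : Type*} [Group G] [Zero M] {f : G → M} {a b : G}
    (h : IsConj a b) {k : ℕ} (ha : ∀ g, f (g * a ^ k * g⁻¹) = 0) (g : G) :
    f (g * b ^ k * g⁻¹) = 0 := by
  obtain ⟨c, hc⟩ := isConj_iff.1 (h.pow k)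
  simpa [← hc, mul_assoc] using ha (g * c)

namespace ArtinD

instance (n : ℕ) : Group.FG (ArtinD n) :=
  Group.fg_iff.2 ⟨_, PresentedGroup.closure_range_of (dnRels n), Set.finite_range _⟩

section Relations

variable {n : ℕ} {i j : Fin n}

theorem of_braid (h : dnBraid n i j) :
    (.of i * .of j * .of i : ArtinD n) = .of j * .of i * .of j := by
  rcases eq_or_ne i j with rfl | hij
  · rfl
  · exact mul_inv_eq_one.1 (PresentedGroup.one_of_mem (rels := dnRels n) ⟨i, j, hij, .inl ⟨h, rfl⟩⟩)

theorem commute_of (h : ¬dnBraid n i j) : Commute (.of i : ArtinD n) (.of j) := by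
  rcases eq_or_ne i j with rfl | hij
  · rfl
  · exact mul_inv_eq_one.1 (PresentedGroup.one_of_mem (rels := dnRels n) ⟨i, j, hij, .inr ⟨h, rfl⟩⟩)

end Relations

variable {m : ℕ}

/-- The generators of `A[D_{m+1}]`, indexed by natural numbers so that the first `m` of them form
a sequence satisfying `BraidRelations`. Only the values at `i ≤ m` are meaningful. -/
def gen (m i : ℕ) : ArtinD (m + 1) := .of (Fin.ofNat (m + 1) i)

theorem val_ofNat {i : ℕ} (hi : i ≤ m) : (Fin.ofNat (m + 1) i).val = i :=
  Nat.mod_eq_of_lt (Nat.lt_succ_of_le hi)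

theorem gen_val (i : Fin (m + 1)) : gen m i = .of i := by
  rw [gen, Fin.ofNat_val_eq_self]

theorem braidRelations_gen : BraidRelations m (gen m) where
  braid i hi := of_braid <| .inl <| by
    rw [val_ofNat (by omega), val_ofNat (by omega)]
    omega
  comm i j hij hj := commute_of <| by
    rw [dnBraid, val_ofNat (by omega), val_ofNat (by omega)]
    omega

theorem gen_last_braid (hm : 2 ≤ m) :
    gen m (m - 2) * gen m m * gen m (m - 2) = gen m m * gen m (m - 2) * gen m m :=
  of_braid <| .inr <| .inr <| .inl <| by
    rw [val_ofNat (by omega), val_ofNat le_rfl]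
    omega

theorem commute_gen_last (hm : 2 ≤ m) : Commute (gen m (m - 1)) (gen m m) :=
  commute_of <| by
    rw [dnBraid, val_ofNat le_rfl, val_ofNat (m.sub_le 1)]
    omega

theorem isConj_gen (hm : 2 ≤ m) {i j : ℕ} (hi : i ≤ m) (hj : j ≤ m) :
    IsConj (gen m i) (gen m j) := by
  have isConj_last (i : ℕ) (hi : i ≤ m) : IsConj (gen m i) (gen m m) := by
    rcases hi.lt_or_eq with hi | rfl
    · exact (braidRelations_gen.isConj hi (by omega)).trans
        (isConj_of_braid (gen_last_braid hm))
    · exact IsConj.refl _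
  exact (isConj_last i hi).trans (isConj_last j hj).symm

theorem lift_min_eq_one {H : Type*} [Group H] {f : ℕ → H} (hf : BraidRelations m f) :
    ∀ r ∈ dnRels (m + 1), FreeGroup.lift (fun i : Fin (m + 1) => f (min i (m - 1))) r = 1 := by
  rintro r ⟨i, j, -, ⟨h, rfl⟩ | ⟨h, rfl⟩⟩ <;>
    simp only [map_mul, map_inv, mul_inv_eq_one, FreeGroup.lift_apply_of] <;>
    generalize hi' : min i.val (m - 1) = i' <;>
    generalize hj' : min j.val (m - 1) = j' <;>
    rw [dnBraid] at h
  · obtain rfl | ⟨rfl, hlt⟩ | ⟨rfl, hlt⟩ :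
        i' = j' ∨ (j' = i' + 1 ∧ i' + 1 < m) ∨ (i' = j' + 1 ∧ j' + 1 < m) := by omega
    exacts [rfl, hf.braid _ hlt, (hf.braid _ hlt).symm]
  · obtain rfl | ⟨hij, hlt⟩ | ⟨hij, hlt⟩ :
        i' = j' ∨ (i' + 1 < j' ∧ j' < m) ∨ (j' + 1 < i' ∧ i' < m) := by omega
    exacts [rfl, hf.comm _ _ hij hlt, (hf.comm _ _ hij hlt).symm]

/-- The homomorphism from `A[D_{m+1}]` induced by `m` elements satisfying the braid relations and
the folding of the Coxeter graph: the last two generators have the same image. -/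
def fold {H : Type*} [Group H] {f : ℕ → H} (hf : BraidRelations m f) : ArtinD (m + 1) →* H :=
  PresentedGroup.toGroup (lift_min_eq_one hf)

section Fold

variable {H : Type*} [Group H] {f : ℕ → H} (hf : BraidRelations m f)

theorem fold_gen {i : ℕ} (hi : i < m) : fold hf (gen m i) = f i := by
  rw [fold, gen, PresentedGroup.toGroup.of, val_ofNat hi.le, min_eq_left (by omega)]

theorem fold_gen_last : fold hf (gen m m) = f (m - 1) := by
  rw [fold, gen, PresentedGroup.toGroup.of, val_ofNat le_rfl, min_eq_right (by omega)]

end Fold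

section Representation

variable (m)

theorem injOn_ofNat : Set.InjOn (Fin.ofNat (m + 1)) (Set.Iic m) := fun i hi j hj h => by
  simpa only [val_ofNat hi, val_ofNat hj] using congrArg Fin.val h

/-- The action of `A[D_{m+1}]` on `m + 1` points through the braid group, with winding numbers. -/
def windingHom : ArtinD (m + 1) →* WindingGroup (Fin (m + 1)) :=
  fold (braidRelations_windingSwap (injOn_ofNat m))

/-- The action of `A[D_{m+1}]` on `m + 1` points through the braid group. -/
def permHom : ArtinD (m + 1) →* Equiv.Perm (Fin (m + 1)) :=
  SemidirectProduct.rightHom.comp (windingHom m)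

/-- Normal generators of the kernel of `permHom m`. -/
def pureRelators : Set (ArtinD (m + 1)) :=
  insert (gen m (m - 1) * (gen m m)⁻¹) ((fun i => gen m i ^ 2) '' Set.Iio m)

variable {m}

theorem windingHom_gen {i : ℕ} (hi : i < m) : windingHom m (gen m i) =
    windingSwap (Fin.ofNat (m + 1) i) (Fin.ofNat (m + 1) (i + 1)) :=
  fold_gen _ hi

theorem windingHom_gen_last (hm : 0 < m) :
    windingHom m (gen m m) = windingHom m (gen m (m - 1)) :=
  (fold_gen_last _).trans (windingHom_gen (Nat.sub_lt hm one_pos)).symm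

theorem permHom_gen {i : ℕ} (hi : i < m) :
    permHom m (gen m i) = Equiv.swap (Fin.ofNat (m + 1) i) (Fin.ofNat (m + 1) (i + 1)) :=
  congrArg SemidirectProduct.right (windingHom_gen hi)

theorem permHom_gen_last (hm : 0 < m) : permHom m (gen m m) = permHom m (gen m (m - 1)) :=
  congrArg SemidirectProduct.right (windingHom_gen_last hm)

theorem permHom_surjective : Function.Surjective (permHom m) := by
  rw [← MonoidHom.range_eq_top, eq_top_iff,
    ← Subgroup.closure_eq_top_of_mclosure_eq_top (Equiv.Perm.mclosure_swap_castSucc_succ m),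
    Subgroup.closure_le]
  rintro _ ⟨i, rfl⟩
  refine ⟨gen m i, (permHom_gen i.isLt).trans (congrArg₂ Equiv.swap ?_ ?_)⟩
  · exact Fin.ext (val_ofNat i.isLt.le)
  · exact Fin.ext (val_ofNat i.isLt)

theorem pureRelators_subset_ker (hm : 0 < m) : pureRelators m ⊆ (permHom m).ker := by
  rintro _ (rfl | ⟨i, hi, rfl⟩)
  · exact mul_inv_eq_one.2 (permHom_gen_last hm).symm
  · rw [SetLike.mem_coe, MonoidHom.mem_ker, map_pow, permHom_gen hi, pow_two, Equiv.swap_mul_self]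

theorem parabolic_sup_normalClosure (hm : 0 < m) :
    parabolic (gen m) m ⊔ Subgroup.normalClosure (pureRelators m) = ⊤ := by
  rw [eq_top_iff, ← PresentedGroup.closure_range_of, Subgroup.closure_le]
  rintro _ ⟨i, rfl⟩
  rw [← gen_val]
  rcases (Fin.is_le i).lt_or_eq with hi | hi
  · exact Subgroup.mem_sup_left (mem_parabolic hi)
  · have hlast : gen m (m - 1) * (gen m m)⁻¹ ∈ Subgroup.normalClosure (pureRelators m) :=
      Subgroup.subset_normalClosure (.inl rfl)
    have hgen : gen m (m - 1) ∈ parabolic (gen m) m := mem_parabolic (Nat.sub_lt hm one_pos)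
    rw [hi]
    simpa [mul_assoc] using
      mul_mem (Subgroup.mem_sup_right (inv_mem hlast)) (Subgroup.mem_sup_left hgen)

theorem mem_parabolic_sup_normalClosure (hm : 0 < m) {k : ℕ} (hk : k ≤ m) {g : ArtinD (m + 1)}
    (hfix : ∀ j, k < j → j ≤ m → permHom m g (Fin.ofNat (m + 1) j) = Fin.ofNat (m + 1) j) :
    g ∈ parabolic (gen m) k ⊔ Subgroup.normalClosure (pureRelators m) :=
  braidRelations_gen.mem_parabolic_sup_of_apply_eq
    (fun i hi => Subgroup.subset_normalClosure (.inr ⟨i, hi, rfl⟩))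
    (parabolic_sup_normalClosure hm)
    (Subgroup.normalClosure_le_normal (pureRelators_subset_ker hm)) (injOn_ofNat m)
    (fun _ hi => permHom_gen hi) hk hfix

theorem ker_permHom (hm : 0 < m) :
    (permHom m).ker = Subgroup.normalClosure (pureRelators m) := by
  refine le_antisymm (fun g hg => ?_)
    (Subgroup.normalClosure_le_normal (pureRelators_subset_ker hm))
  have h := mem_parabolic_sup_normalClosure hm m.zero_le (g := g) fun j _ _ => by
    rw [MonoidHom.mem_ker.1 hg, Equiv.Perm.one_apply]
  rwa [parabolic_zero, bot_sup_eq] at h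

theorem mem_centralizer_sup_ker (hm : 2 ≤ m) {g : ArtinD (m + 1)}
    (hfix : permHom m g (Fin.ofNat (m + 1) (m - 1)) = Fin.ofNat (m + 1) (m - 1))
    (hfix_last : permHom m g (Fin.ofNat (m + 1) m) = Fin.ofNat (m + 1) m) :
    g ∈ Subgroup.centralizer {gen m (m - 1) ^ 2} ⊔ (permHom m).ker := by
  have hmem := mem_parabolic_sup_normalClosure (k := m - 2) (by omega) (by omega) (g := g)
    fun j hkj hjm => by
      obtain rfl | rfl : j = m - 1 ∨ j = m := by omega
      exacts [hfix, hfix_last]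
  rw [← ker_permHom (by omega)] at hmem
  refine SetLike.le_def.1 (sup_le_sup_right (fun x hx => ?_) _) hmem
  have hcomm := braidRelations_gen.parabolic_le_centralizer (k := m - 2) (by omega) hx
  rw [show m - 2 + 1 = m - 1 by omega, Subgroup.mem_centralizer_singleton_iff] at hcomm
  exact Subgroup.mem_centralizer_singleton_iff.2 (Commute.pow_right hcomm 2)

theorem eq_zero_of_apply_conj_gen_sq (hm : 2 ≤ m) {f : ArtinD (m + 1) → ℤ}
    (hf : AdditiveOn (permHom m).ker f) (hzero : ∀ g, f (g * gen m (m - 1) ^ 2 * g⁻¹) = 0)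
    {x : ArtinD (m + 1)} (hx : x ∈ (permHom m).ker) : f x = 0 := by
  have hker := pureRelators_subset_ker (m := m) (by omega)
  have hsq (i : ℕ) (hi : i ≤ m) : ∀ g, f (g * gen m i ^ 2 * g⁻¹) = 0 :=
    apply_conj_pow_eq_zero_of_isConj (isConj_gen hm (m.sub_le 1) hi) hzero
  have sq_mem (i : ℕ) (hi : i < m) : gen m i ^ 2 ∈ (permHom m).ker := hker (.inr ⟨i, hi, rfl⟩)
  have last_sq_mem : gen m m ^ 2 ∈ (permHom m).ker := by
    rw [MonoidHom.mem_ker, map_pow, permHom_gen_last (by omega), ← map_pow]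
    exact sq_mem (m - 1) (by omega)
  rw [ker_permHom (by omega)] at hx
  refine hf.eq_zero_of_mem_normalClosure (fun s hs => ⟨hker hs, ?_⟩) hx
  rcases hs with rfl | ⟨i, hi, rfl⟩
  · exact fun g => hf.apply_conj_mul_inv_eq_zero (commute_gen_last hm) (sq_mem _ (by omega))
      last_sq_mem (hker (.inl rfl)) (hzero g) (hsq m le_rfl g)
  · exact hsq i (le_of_lt hi)

theorem nonempty_pairWinding (hm : 2 ≤ m) :
    Nonempty (PairWinding (Fin (m + 1)) (ArtinD (m + 1))) := by
  have hne : Fin.ofNat (m + 1) (m - 1) ≠ Fin.ofNat (m + 1) m :=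
    (injOn_ofNat m).ne (Set.mem_Iic.2 (m.sub_le 1)) Set.self_mem_Iic (by omega)
  have hτ : windingHom m (gen m (m - 1)) =
      windingSwap (Fin.ofNat (m + 1) (m - 1)) (Fin.ofNat (m + 1) m) := by
    rw [windingHom_gen (by omega), Nat.sub_add_cancel (by omega)]
  exact PairWinding.nonempty_of_hom (ρ := permHom m) (fun _ => rfl) permHom_surjective hne hτ
    (fun _ => mem_centralizer_sup_ker hm)
    (fun _ hf hzero _ => eq_zero_of_apply_conj_gen_sq hm hf hzero)

end Representation

end ArtinD

theorem artinD_propertyRInfinity_general (n : ℕ) (hn : 5 ≤ n) : PropertyRInfinity (ArtinD n) := by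
  obtain ⟨m, rfl⟩ : ∃ m, n = m + 1 := ⟨n - 1, by omega⟩
  obtain ⟨D⟩ := ArtinD.nonempty_pairWinding (m := m) (by omega)
  exact D.propertyRInfinity (by rwa [Nat.card_fin])

/-- For every `n ≥ 6`, the Artin group `A[D_n]` has property `R_∞`. -/
theorem artinD_propertyRInfinity (n : ℕ) (hn : 6 ≤ n) :
    PropertyRInfinity (ArtinD n) :=
  artinD_propertyRInfinity_general n (by omega)
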